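/- Let X₁, …, X_N be i.i.d. standard Gaussian random variables and let r > 0. Then for N > max{e⁴, r+1}, E[1 / (max_{1≤k≤N} |X_k|)^r] ≤ C_r (log N)^{-r/2} for a constant C_r depending only on r. -/

import Mathlib

open MeasureTheory ProbabilityTheory Real

/-!
Let `M` be the maximum of the `|X_k|` and let `J` be a set of `m > r` indices. If `M < t`, then
`M ^ (-r) ≤ ∏_{j ∈ J} |X_j| ^ (-r / m)`, while `|X_j| < t` for each of the other indices. By
independence,
`E[M ^ (-r)] ≤ t ^ (-r) + E[|X₁| ^ (-r / m)] ^ m * P(|X₁| < t) ^ (N - m)`,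
where the negative moment is finite because `r / m < 1`. For `t ^ 2 = log N / 2` the first term has
the required order, and `P(|X₁| ≥ t)` is at least a constant times `N ^ (-1 / 2)`, so the second
term decays like `exp (-c √N)`.
-/

lemma rpow_neg_iSup_le_prod {ι : Type*} [Finite ι] {J : Finset ι} {x : ι → ℝ}
    (hx : ∀ i, 0 < x i) {r : ℝ} (hr : 0 ≤ r) (hJ : J.Nonempty) :
    (⨆ i, x i) ^ (-r) ≤ ∏ i ∈ J, x i ^ (-(r / J.card)) := by
  have le_sup (i : ι) : x i ≤ ⨆ i, x i := le_ciSup (Set.finite_range x).bddAbove i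
  obtain ⟨j, hj⟩ := hJ
  have sup_nonneg : 0 ≤ ⨆ i, x i := (hx j).le.trans (le_sup j)
  have card_ne_zero : (J.card : ℝ) ≠ 0 := Nat.cast_ne_zero.2 (Finset.card_ne_zero_of_mem hj)
  calc (⨆ i, x i) ^ (-r)
      = ∏ _i ∈ J, (⨆ i, x i) ^ (-(r / J.card)) := by
        rw [Finset.prod_const, ← rpow_mul_natCast sup_nonneg]
        congr 1
        field_simp
    _ ≤ ∏ i ∈ J, x i ^ (-(r / J.card)) := by
        refine Finset.prod_le_prod (fun i _ ↦ ?_) fun i _ ↦ ?_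
        exacts [rpow_nonneg sup_nonneg _,
          rpow_le_rpow_of_nonpos (hx i) (le_sup i) (neg_nonpos.2 (by positivity))]

section IidMaximum

variable {ι Ω : Type*} [Fintype ι] [MeasurableSpace Ω] {μ : Measure Ω} {J : Finset ι}

lemma rpow_neg_iSup_le_add [DecidableEq ι] {x : ι → ℝ} (hx : ∀ i, 0 < x i) {r t : ℝ} (hr : 0 ≤ r)
    (ht : 0 < t) (hJ : J.Nonempty) :
    (⨆ i, x i) ^ (-r) ≤ t ^ (-r) +
      (∏ i ∈ J, x i ^ (-(r / J.card))) * ∏ i ∈ Jᶜ, (Set.Iio t).indicator 1 (x i) := by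
  obtain h | h := le_or_gt t (⨆ i, x i)
  · refine (rpow_le_rpow_of_nonpos ht h (neg_nonpos.2 hr)).trans (le_add_of_nonneg_right ?_)
    refine mul_nonneg (Finset.prod_nonneg fun i _ ↦ rpow_nonneg (hx i).le _)
      (Finset.prod_nonneg fun i _ ↦ Set.indicator_nonneg (fun _ _ ↦ zero_le_one) _)
  · have lt_t (i : ι) : x i ∈ Set.Iio t := (le_ciSup (Set.finite_range x).bddAbove i).trans_lt h
    simp only [Set.indicator_of_mem (lt_t _), Pi.one_apply, Finset.prod_const_one, mul_one]
    exact (rpow_neg_iSup_le_prod hx hr hJ).trans (le_add_of_nonneg_left (by positivity))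

lemma prod_comp_piecewise_const {β R : Type*} [DecidableEq ι] [CommMonoid R] (φ : ι → β → R)
    (b c : β) :
    ∏ i, φ i (J.piecewise (fun _ ↦ b) (fun _ ↦ c) i) = (∏ i ∈ J, φ i b) * ∏ i ∈ Jᶜ, φ i c := by
  rw [← Finset.prod_mul_prod_compl J]
  congr 1 <;> refine Finset.prod_congr rfl fun i hi ↦ ?_
  · rw [Finset.piecewise_eq_of_mem _ _ _ hi]
  · rw [Finset.piecewise_eq_of_notMem _ _ _ (Finset.mem_compl.1 hi)]

lemma prod_piecewise_const_apply {α R : Type*} [DecidableEq ι] [CommMonoid R] (f g : α → R)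
    (a : ι → α) :
    ∏ i, J.piecewise (fun _ ↦ f) (fun _ ↦ g) i (a i) = (∏ i ∈ J, f (a i)) * ∏ i ∈ Jᶜ, g (a i) :=
  prod_comp_piecewise_const (fun i h ↦ h (a i)) f g

lemma integrable_prod_mul_prod_compl {𝕜 : Type*} [NormedCommRing 𝕜] [DecidableEq ι]
    [SigmaFinite μ] {f g : Ω → 𝕜} (hf : Integrable f μ) (hg : Integrable g μ) :
    Integrable (fun a : ι → Ω ↦ (∏ i ∈ J, f (a i)) * ∏ i ∈ Jᶜ, g (a i))
      (Measure.pi fun _ ↦ μ) := by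
  simp only [← prod_piecewise_const_apply]
  refine Integrable.fintype_prod fun i ↦ ?_
  by_cases hi : i ∈ J <;> simpa [hi]

lemma integral_prod_mul_prod_compl {𝕜 : Type*} [RCLike 𝕜] [DecidableEq ι] [SigmaFinite μ]
    (f g : Ω → 𝕜) :
    ∫ a : ι → Ω, (∏ i ∈ J, f (a i)) * ∏ i ∈ Jᶜ, g (a i) ∂(Measure.pi fun _ ↦ μ) =
      (∫ ω, f ω ∂μ) ^ J.card * (∫ ω, g ω ∂μ) ^ Jᶜ.card := by
  simp only [← prod_piecewise_const_apply]
  rw [integral_fintype_prod_eq_prod]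
  simpa only [Finset.prod_const] using
    prod_comp_piecewise_const (J := J) (fun _ h ↦ ∫ ω, h ω ∂μ) f g

lemma ae_forall_pi [SigmaFinite μ] {p : Ω → Prop} (hp : ∀ᵐ ω ∂μ, p ω) :
    ∀ᵐ a : ι → Ω ∂(Measure.pi fun _ ↦ μ), ∀ i, p (a i) :=
  Filter.eventually_all.2 fun i ↦
    (Measure.tendsto_eval_ae_ae (μ := fun _ ↦ μ) (i := i)).eventually hp

variable [IsProbabilityMeasure μ] {Y : Ω → ℝ}

lemma ae_rpow_neg_iSup_le_add [DecidableEq ι] (hpos : ∀ᵐ ω ∂μ, 0 < Y ω) {r t : ℝ} (hr : 0 ≤ r)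
    (ht : 0 < t) (hJ : J.Nonempty) :
    ∀ᵐ a : ι → Ω ∂(Measure.pi fun _ ↦ μ), (⨆ i, Y (a i)) ^ (-r) ≤ t ^ (-r) +
      (∏ i ∈ J, Y (a i) ^ (-(r / J.card))) * ∏ i ∈ Jᶜ, (Set.Iio t).indicator 1 (Y (a i)) := by
  filter_upwards [ae_forall_pi hpos] with a ha using rpow_neg_iSup_le_add ha hr ht hJ

lemma integrable_indicator_Iio_comp (hY : Measurable Y) (t : ℝ) :
    Integrable (fun ω ↦ (Set.Iio t).indicator (1 : ℝ → ℝ) (Y ω)) μ :=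
  (integrable_const (1 : ℝ)).indicator (hY measurableSet_Iio)

lemma integrable_rpow_neg_iSup (hY : Measurable Y) (hpos : ∀ᵐ ω ∂μ, 0 < Y ω) {r : ℝ} (hr : 0 ≤ r)
    (hJ : J.Nonempty) (hint : Integrable (fun ω ↦ Y ω ^ (-(r / J.card))) μ) :
    Integrable (fun a : ι → Ω ↦ (⨆ i, Y (a i)) ^ (-r)) (Measure.pi fun _ ↦ μ) := by
  classical
  have hmeas : Measurable fun a : ι → Ω ↦ (⨆ i, Y (a i)) ^ (-r) :=
    (Measurable.iSup fun i ↦ hY.comp (measurable_pi_apply i)).pow_const _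
  have hmaj := (integrable_const ((1 : ℝ) ^ (-r))).add
    (integrable_prod_mul_prod_compl (J := J) hint (integrable_indicator_Iio_comp hY 1))
  refine hmaj.mono' hmeas.aestronglyMeasurable ?_
  filter_upwards [ae_rpow_neg_iSup_le_add hpos hr one_pos hJ, ae_forall_pi hpos] with a ha hpos
  rwa [norm_of_nonneg (rpow_nonneg (iSup_nonneg fun i ↦ (hpos i).le) _)]

theorem integral_rpow_neg_iSup_le [DecidableEq ι] (hY : Measurable Y) (hpos : ∀ᵐ ω ∂μ, 0 < Y ω)
    {r t : ℝ} (hr : 0 ≤ r) (ht : 0 < t) (hJ : J.Nonempty)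
    (hint : Integrable (fun ω ↦ Y ω ^ (-(r / J.card))) μ) :
    ∫ a : ι → Ω, (⨆ i, Y (a i)) ^ (-r) ∂(Measure.pi fun _ ↦ μ) ≤
      t ^ (-r) + (∫ ω, Y ω ^ (-(r / J.card)) ∂μ) ^ J.card * μ.real {ω | Y ω < t} ^ Jᶜ.card := by
  have hmaj := integrable_prod_mul_prod_compl (J := J) hint (integrable_indicator_Iio_comp hY t)
  have integral_indicator :
      ∫ ω, (Set.Iio t).indicator (1 : ℝ → ℝ) (Y ω) ∂μ = μ.real {ω | Y ω < t} :=
    integral_indicator_one (hY measurableSet_Iio)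
  refine (integral_mono_ae (integrable_rpow_neg_iSup hY hpos hr hJ hint)
    ((integrable_const _).add hmaj) (ae_rpow_neg_iSup_le_add hpos hr ht hJ)).trans_eq ?_
  simp only [Pi.add_apply]
  rw [integral_add (integrable_const _) hmaj, integral_prod_mul_prod_compl
    (fun ω ↦ Y ω ^ (-(r / J.card))) fun ω ↦ (Set.Iio t).indicator 1 (Y ω), integral_indicator,
    integral_const, probReal_univ, one_smul]

end IidMaximum

open scoped NNReal

section Gaussian

variable {m : ℝ} {v : ℝ≥0}

lemma integrable_abs_rpow_gaussianReal (hv : v ≠ 0) {p : ℝ} (hp : -1 < p) :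
    Integrable (fun x ↦ |x| ^ p) (gaussianReal 0 v) := by
  have density_abs (x : ℝ) : gaussianPDFReal 0 v |x| = gaussianPDFReal 0 v x := by
    simp [gaussianPDFReal]
  have half_line : IntegrableOn (fun y ↦ gaussianPDFReal 0 v y * y ^ p) (Set.Ioi 0) := by
    have h : IntegrableOn (fun y ↦ y ^ p * exp (-(2 * v : ℝ)⁻¹ * y ^ 2)) (Set.Ioi 0) :=
      integrableOn_rpow_mul_exp_neg_mul_sq (by positivity) hp
    refine IntegrableOn.congr_fun (h.const_mul (√(2 * π * v))⁻¹) (fun y _ ↦ ?_) measurableSet_Ioi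
    simp only [gaussianPDFReal]
    ring_nf
  have real_line : Integrable (fun x : ℝ ↦ gaussianPDFReal 0 v ‖x‖ * ‖x‖ ^ p) :=
    (integrable_fun_norm_addHaar volume (f := fun y ↦ gaussianPDFReal 0 v y * y ^ p)).2
      (by simpa using half_line)
  rw [gaussianReal_of_var_ne_zero _ hv, integrable_withDensity_iff_integrable_smul'
    (measurable_gaussianPDF 0 v) (ae_of_all _ fun _ ↦ gaussianPDF_lt_top)]
  simpa only [toReal_gaussianPDF, smul_eq_mul, norm_eq_abs, density_abs] using real_line

lemma antitoneOn_gaussianPDFReal (m : ℝ) (v : ℝ≥0) :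
    AntitoneOn (gaussianPDFReal m v) (Set.Ici m) := by
  intro x hx y _ hxy
  simp only [gaussianPDFReal]
  have hsq : (x - m) ^ 2 ≤ (y - m) ^ 2 := by
    have : 0 ≤ x - m := sub_nonneg.2 hx
    gcongr
  gcongr

lemma gaussianPDFReal_add_one_le_measureReal_Ici (hv : v ≠ 0) {t : ℝ} (ht : m ≤ t) :
    gaussianPDFReal m v (t + 1) ≤ (gaussianReal m v).real (Set.Ici t) := by
  have hle : ∀ x ∈ Set.Icc t (t + 1), gaussianPDFReal m v (t + 1) ≤ gaussianPDFReal m v x :=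
    fun x hx ↦ antitoneOn_gaussianPDFReal m v (ht.trans hx.1) (ht.trans (by simp)) hx.2
  calc gaussianPDFReal m v (t + 1)
      = gaussianPDFReal m v (t + 1) * volume.real (Set.Icc t (t + 1)) := by simp
    _ ≤ ∫ x in Set.Icc t (t + 1), gaussianPDFReal m v x :=
        setIntegral_ge_of_const_le_real measurableSet_Icc (by simp) hle
          (integrable_gaussianPDFReal m v).integrableOn
    _ = (gaussianReal m v).real (Set.Icc t (t + 1)) := by
        rw [measureReal_def, gaussianReal_apply_eq_integral m hv, ENNReal.toReal_ofReal
          (integral_nonneg (gaussianPDFReal_nonneg m v))]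
    _ ≤ (gaussianReal m v).real (Set.Ici t) := measureReal_mono Set.Icc_subset_Ici_self

lemma exp_neg_sq_add_two_le_gaussianPDFReal (t : ℝ) :
    exp (-(t ^ 2 + 2)) ≤ gaussianPDFReal 0 1 (t + 1) := by
  have sqrt_two_pi_le : √(2 * π) ≤ exp 1 := by
    rw [sqrt_le_left (exp_pos 1).le]
    nlinarith [pi_lt_d2, exp_one_gt_d9]
  have exponent_le : (t + 1) ^ 2 / 2 ≤ t ^ 2 + 1 := by nlinarith [sq_nonneg (t - 1)]
  calc exp (-(t ^ 2 + 2)) = (exp 1)⁻¹ * exp (-(t ^ 2 + 1)) := by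
        rw [← exp_neg, ← exp_add]
        ring_nf
    _ ≤ (√(2 * π))⁻¹ * exp (-((t + 1) ^ 2 / 2)) := by gcongr
    _ = gaussianPDFReal 0 1 (t + 1) := by simp [gaussianPDFReal, neg_div]

lemma gaussianReal_real_abs_lt_le {t : ℝ} (ht : 0 ≤ t) :
    (gaussianReal 0 1).real {x | |x| < t} ≤ exp (-exp (-(t ^ 2 + 2))) := by
  have htail : exp (-(t ^ 2 + 2)) ≤ (gaussianReal 0 1).real (Set.Ici t) :=
    (exp_neg_sq_add_two_le_gaussianPDFReal t).trans
      (gaussianPDFReal_add_one_le_measureReal_Ici one_ne_zero ht)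
  calc (gaussianReal 0 1).real {x | |x| < t}
      ≤ (gaussianReal 0 1).real (Set.Ici t)ᶜ :=
        measureReal_mono fun x hx ↦ not_le.2 ((le_abs_self x).trans_lt hx)
    _ = 1 - (gaussianReal 0 1).real (Set.Ici t) := probReal_compl_eq_one_sub measurableSet_Ici
    _ ≤ 1 - exp (-(t ^ 2 + 2)) := by gcongr
    _ ≤ exp (-exp (-(t ^ 2 + 2))) := one_sub_le_exp_neg _

end Gaussian

lemma exp_neg_mul_sqrt_le_mul_log_rpow {c p x : ℝ} (hc : 0 < c) (hp : 0 ≤ p) (hx : 1 < x) :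
    exp (-(c * √x)) ≤ (2 * p / c) ^ p * log x ^ (-p) := by
  have hlog : 0 < log x := log_pos hx
  have log_le : log x ≤ 2 * √x := by
    have := log_le_rpow_div (zero_le_one.trans hx.le) one_half_pos
    rw [← sqrt_eq_rpow] at this
    linarith
  have key : log x ^ p ≤ (2 * p / c) ^ p * exp (c * √x) := by
    calc log x ^ p ≤ |2 * √x| ^ p := by
          rw [abs_of_nonneg (by positivity)]
          gcongr
      _ ≤ (p / |c / 2|) ^ p * exp (|c / 2| * |2 * √x|) :=
          rpow_abs_le_mul_exp_abs _ hp (by positivity)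
      _ = (2 * p / c) ^ p * exp (c * √x) := by
          rw [abs_of_pos (half_pos hc), abs_of_nonneg (by positivity)]
          congr 2 <;> field_simp
  rw [exp_neg, rpow_neg hlog.le, ← div_eq_mul_inv, le_div_iff₀ (by positivity),
    inv_mul_le_iff₀ (exp_pos _), mul_comm]
  exact key

lemma gaussianReal_real_abs_lt_pow_le {p : ℝ} (hp : 0 ≤ p) {N m : ℕ} (hN : 1 < N) (hm : m ≤ N) :
    (gaussianReal 0 1).real {x | |x| < √(log N / 2)} ^ (N - m) ≤
      exp m * (2 * p * exp 2) ^ p * log N ^ (-p) := by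
  have hN' : (1 : ℝ) < N := Nat.one_lt_cast.2 hN
  have hlog : 0 < log N := log_pos hN'
  set q : ℝ := exp (-(√(log N / 2) ^ 2 + 2)) with hq
  have q_le_one : q ≤ 1 := exp_le_one_iff.2 (by linarith [sq_nonneg √(log N / 2)])
  have N_mul_q : N * q = exp (-2) * √N := by
    rw [hq, sq_sqrt (half_pos hlog).le, neg_add, exp_add, exp_neg, exp_half, exp_log (by linarith)]
    have : 0 < √(N : ℝ) := sqrt_pos.2 (by linarith)
    field_simp
    rw [sq_sqrt (by linarith)]
  calc (gaussianReal 0 1).real {x | |x| < √(log N / 2)} ^ (N - m)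
      ≤ exp (-q) ^ (N - m) := by
        gcongr
        exact gaussianReal_real_abs_lt_le (sqrt_nonneg _)
    _ = exp (m * q - exp (-2) * √N) := by
        rw [← exp_nat_mul, Nat.cast_sub hm, ← N_mul_q]
        ring_nf
    _ ≤ exp (m - exp (-2) * √N) := by
        gcongr
        exact mul_le_of_le_one_right m.cast_nonneg q_le_one
    _ = exp m * exp (-(exp (-2) * √N)) := by rw [← exp_add, sub_eq_add_neg]
    _ ≤ exp m * ((2 * p / exp (-2)) ^ p * log N ^ (-p)) := by
        gcongr
        exact exp_neg_mul_sqrt_le_mul_log_rpow (exp_pos _) hp hN'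
    _ = exp m * (2 * p * exp 2) ^ p * log N ^ (-p) := by
        rw [exp_neg, div_inv_eq_mul, ← mul_assoc (exp m)]

lemma ae_abs_pos_gaussianReal {m : ℝ} {v : ℝ≥0} (hv : v ≠ 0) :
    ∀ᵐ x ∂(gaussianReal m v), 0 < |x| := by
  have := nullSingletonClass_gaussianReal (μ := m) hv
  filter_upwards [Measure.ae_ne _ 0] with x hx using abs_pos.2 hx

section GaussianMaximum

variable {ι : Type*} [Fintype ι] {r : ℝ} {m : ℕ}

lemma integrable_abs_rpow_neg_div_gaussianReal (hr : 0 ≤ r) (hrm : r < m) :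
    Integrable (fun x ↦ |x| ^ (-(r / m))) (gaussianReal 0 1) :=
  integrable_abs_rpow_gaussianReal one_ne_zero
    (neg_lt_neg ((div_lt_one (hr.trans_lt hrm)).2 hrm))

lemma exists_nonempty_card_eq (hm₀ : 0 < m) (hm : m ≤ Fintype.card ι) :
    ∃ J : Finset ι, J.Nonempty ∧ J.card = m := by
  obtain ⟨J, -, hJ⟩ := Finset.exists_subset_card_eq (s := (Finset.univ : Finset ι)) hm
  exact ⟨J, Finset.card_pos.1 (hJ ▸ hm₀), hJ⟩

lemma integrable_rpow_neg_iSup_abs_gaussianReal (hr : 0 ≤ r) (hrι : r < Fintype.card ι) :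
    Integrable (fun a : ι → ℝ ↦ (⨆ i, |a i|) ^ (-r)) (Measure.pi fun _ ↦ gaussianReal 0 1) := by
  have card_pos : 0 < Fintype.card ι := Nat.cast_pos.1 (hr.trans_lt hrι)
  exact integrable_rpow_neg_iSup (J := Finset.univ) measurable_abs
    (ae_abs_pos_gaussianReal one_ne_zero) hr (Finset.card_pos.1 card_pos)
    (integrable_abs_rpow_neg_div_gaussianReal hr hrι)

/-- The constant `C` in the bound `E[(max_i |X_i|)^{-r}] ≤ C (log N)^{-r/2}` for `N` independent
standard Gaussians. The parameter `m > r` is the number of coordinates whose moments of order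
`-r / m` control the event that the maximum is small. -/
noncomputable def gaussianMaxConst (r : ℝ) (m : ℕ) : ℝ :=
  2 ^ (r / 2) + (∫ x, |x| ^ (-(r / m)) ∂(gaussianReal 0 1)) ^ m *
    (exp m * (r * exp 2) ^ (r / 2))

lemma integral_abs_rpow_nonneg (μ : Measure ℝ) (p : ℝ) : 0 ≤ ∫ x, |x| ^ p ∂μ :=
  integral_nonneg fun x ↦ rpow_nonneg (abs_nonneg x) p

lemma gaussianMaxConst_pos (hr : 0 ≤ r) (m : ℕ) : 0 < gaussianMaxConst r m := by
  have := integral_abs_rpow_nonneg (gaussianReal 0 1) (-(r / m))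
  unfold gaussianMaxConst
  positivity

theorem integral_rpow_neg_iSup_abs_gaussianReal_le (hr : 0 ≤ r) (hrm : r < m)
    (hm : m ≤ Fintype.card ι) (hι : 1 < Fintype.card ι) :
    ∫ a : ι → ℝ, (⨆ i, |a i|) ^ (-r) ∂(Measure.pi fun _ ↦ gaussianReal 0 1) ≤
      gaussianMaxConst r m * log (Fintype.card ι) ^ (-r / 2) := by
  classical
  set N := Fintype.card ι
  set A := ∫ x, |x| ^ (-(r / m)) ∂(gaussianReal 0 1) with hA
  have A_nonneg : 0 ≤ A := integral_abs_rpow_nonneg _ _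
  have hlog : 0 < log N := log_pos (Nat.one_lt_cast.2 hι)
  have sqrt_rpow : √(log N / 2) ^ (-r) = 2 ^ (r / 2) * log N ^ (-r / 2) := by
    rw [← rpow_div_two_eq_sqrt _ (half_pos hlog).le, div_rpow hlog.le zero_le_two, neg_div,
      rpow_neg zero_le_two, div_inv_eq_mul, mul_comm]
  have small_max : (gaussianReal 0 1).real {x | |x| < √(log N / 2)} ^ (N - m) ≤
      exp m * (r * exp 2) ^ (r / 2) * log N ^ (-r / 2) := by
    have h := gaussianReal_real_abs_lt_pow_le (div_nonneg hr zero_le_two) hι hm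
    rwa [mul_div_cancel₀ r two_ne_zero, ← neg_div] at h
  have hint := integrable_abs_rpow_neg_div_gaussianReal hr hrm
  have m_pos : 0 < m := Nat.cast_pos.1 (hr.trans_lt hrm)
  obtain ⟨J, hJ, rfl⟩ := exists_nonempty_card_eq m_pos hm
  calc ∫ a : ι → ℝ, (⨆ i, |a i|) ^ (-r) ∂(Measure.pi fun _ ↦ gaussianReal 0 1)
      ≤ √(log N / 2) ^ (-r) +
          A ^ J.card * (gaussianReal 0 1).real {x | |x| < √(log N / 2)} ^ (N - J.card) := by
        rw [← Finset.card_compl]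
        exact integral_rpow_neg_iSup_le measurable_abs (ae_abs_pos_gaussianReal one_ne_zero) hr
          (by positivity) hJ hint
    _ ≤ 2 ^ (r / 2) * log N ^ (-r / 2) +
          A ^ J.card * (exp J.card * (r * exp 2) ^ (r / 2) * log N ^ (-r / 2)) :=
        add_le_add sqrt_rpow.le (mul_le_mul_of_nonneg_left small_max (pow_nonneg A_nonneg _))
    _ = gaussianMaxConst r J.card * log N ^ (-r / 2) := by
        rw [gaussianMaxConst, ← hA]
        ring

end GaussianMaximum

theorem expected_inv_max_gaussian_general (r : ℝ) (hr : 0 ≤ r) :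
    ∃ C : ℝ, 0 < C ∧ ∀ N : ℕ, 1 < N → r < N →
      Integrable (fun a : Fin N → ℝ ↦ (⨆ k, |a k|) ^ (-r))
        (Measure.pi fun _ ↦ gaussianReal 0 1) ∧
      ∫ a : Fin N → ℝ, (⨆ k, |a k|) ^ (-r) ∂(Measure.pi fun _ ↦ gaussianReal 0 1) ≤
        C * log N ^ (-r / 2) := by
  have r_lt : r < (⌊r⌋₊ + 1 : ℕ) := by exact_mod_cast Nat.lt_floor_add_one r
  refine ⟨gaussianMaxConst r (⌊r⌋₊ + 1), gaussianMaxConst_pos hr _, fun N hN hrN ↦ ⟨?_, ?_⟩⟩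
  · exact integrable_rpow_neg_iSup_abs_gaussianReal hr (by simpa using hrN)
  · have floor_lt : ⌊r⌋₊ + 1 ≤ N := (Nat.floor_lt hr).2 hrN
    simpa only [Fintype.card_fin] using integral_rpow_neg_iSup_abs_gaussianReal_le (ι := Fin N) hr
      r_lt (by simpa using floor_lt) (by simpa using hN)

/-- Negative moments of the maximum of `N` i.i.d. standard Gaussians:
`E[(max_k |X_k|)^{-r}] ≤ C_r (log N)^{-r/2}` for `N > max{e⁴, r+1}`. -/
theorem expected_inv_max_gaussian (r : ℝ) (hr : 0 < r) :
    ∃ C : ℝ, 0 < C ∧ ∀ N : ℕ, Real.exp 4 < N → r + 1 < N →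
      (∫ a : Fin N → ℝ, (⨆ k, |a k|) ^ (-r) ∂(Measure.pi fun _ => gaussianReal 0 1)) ≤
        C * Real.log N ^ (-r / 2) := by
  obtain ⟨C, hC, h⟩ := expected_inv_max_gaussian_general r hr.le
  exact ⟨C, hC, fun N _ hN ↦ (h N (by exact_mod_cast (by linarith : (1 : ℝ) < N)) (by linarith)).2⟩
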